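/- Let ρ, ν be compactly supported probability measures on ℝ^d with noised densities ρ_σ, ν_σ > 0 and scores s^ρ, s^ν, and let s^η be the score of (1-η)ρ_σ + ην_σ. Define g(z) = (ν_σ(z)/ρ_σ(z))(s^ν(z) − s^ρ(z)). Then the difference quotients F_h(z) = (s^h(z) − s^0(z))/h converge to g(z) pointwise as h → 0⁺, and there is a dominating function G(z) = (2/ρ_σ(z))((ρ_σ(z)/σ²)(2D^ρ + D^ν) + (ν_σ(z)/σ²)(2D^ν + D^ρ)) with ‖F_h(z)‖ ≤ G(z) for all z and all sufficiently small h > 0, where D^ρ, D^ν bound the norms of the Gaussian-weighted barycenters of ρ and ν. Consequently, by dominated convergence, ∫ ‖F_h(z) − g(z)‖² ρ_σ(z) dz → 0 as h → 0⁺, i.e., (s^h − s^0)/h → g in L²(ℝ^d, ρ_σ). -/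

import Mathlib

open MeasureTheory Real

lemma aux_noised {d : ℕ} (μ : Measure (EuclideanSpace ℝ (Fin d))) [IsProbabilityMeasure μ]
    (D : ℝ) (hsupp : μ (Metric.closedBall 0 D)ᶜ = 0) (σ c : ℝ) (hσ : 0 < σ) (hc : 0 < c)
    (f : EuclideanSpace ℝ (Fin d) → ℝ)
    (hf : ∀ z, f z = ∫ x, c * Real.exp (-‖z - x‖ ^ 2 / (2 * σ ^ 2)) ∂μ) :
    0 ≤ D ∧ (∀ z, 0 < f z) ∧
    (∀ z, c * Real.exp (-(‖z‖ ^ 2 + 2 * D * ‖z‖ + D ^ 2) / (2 * σ ^ 2)) ≤ f z) ∧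
    (∀ z, f z ≤ c * Real.exp (-(‖z‖ ^ 2 - 2 * D * ‖z‖) / (2 * σ ^ 2))) ∧
    (∀ z, ∃ m : EuclideanSpace ℝ (Fin d), ‖m‖ ≤ D * f z ∧
      HasGradientAt f ((σ ^ 2)⁻¹ • (m - f z • z)) z) := by
  have hae : ∀ᵐ x ∂μ, ‖x‖ ≤ D := by
    have : ∀ᵐ x ∂μ, x ∈ Metric.closedBall (0 : EuclideanSpace ℝ (Fin d)) D := hsupp
    filter_upwards [this] with x hx
    simpa using hx
  have hD : 0 ≤ D := by
    obtain ⟨x, hx⟩ := hae.exists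
    exact (norm_nonneg x).trans hx
  have hσ2 : 0 < 2 * σ ^ 2 := by positivity
  have hcont : ∀ z : EuclideanSpace ℝ (Fin d),
      Continuous fun x => c * Real.exp (-‖z - x‖ ^ 2 / (2 * σ ^ 2)) := by
    intro z; fun_prop
  have hle : ∀ z x : EuclideanSpace ℝ (Fin d),
      c * Real.exp (-‖z - x‖ ^ 2 / (2 * σ ^ 2)) ≤ c := by
    intro z x
    have : Real.exp (-‖z - x‖ ^ 2 / (2 * σ ^ 2)) ≤ 1 := by
      rw [Real.exp_le_one_iff, neg_div]
      have : 0 ≤ ‖z - x‖ ^ 2 / (2 * σ ^ 2) := by positivity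
      linarith
    nlinarith
  have hint : ∀ z, Integrable (fun x => c * Real.exp (-‖z - x‖ ^ 2 / (2 * σ ^ 2))) μ := by
    intro z
    refine Integrable.of_bound (hcont z).aestronglyMeasurable c (Filter.Eventually.of_forall ?_)
    intro x
    rw [Real.norm_of_nonneg (by positivity)]
    exact hle z x
  have hlow : ∀ z, c * Real.exp (-(‖z‖ ^ 2 + 2 * D * ‖z‖ + D ^ 2) / (2 * σ ^ 2)) ≤ f z := by
    intro z
    rw [hf]
    have h1 := integral_mono_ae (integrable_const (μ := μ)
      (c * Real.exp (-(‖z‖ ^ 2 + 2 * D * ‖z‖ + D ^ 2) / (2 * σ ^ 2)))) (hint z) (by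
        filter_upwards [hae] with x hx
        have : ‖z - x‖ ≤ ‖z‖ + D := (norm_sub_le z x).trans (by linarith)
        have : ‖z - x‖ ^ 2 ≤ (‖z‖ + D) ^ 2 := by gcongr
        gcongr
        nlinarith)
    simpa using h1
  have hup : ∀ z, f z ≤ c * Real.exp (-(‖z‖ ^ 2 - 2 * D * ‖z‖) / (2 * σ ^ 2)) := by
    intro z
    rw [hf]
    have h1 := integral_mono_ae (hint z) (integrable_const (μ := μ)
      (c * Real.exp (-(‖z‖ ^ 2 - 2 * D * ‖z‖) / (2 * σ ^ 2))))  (by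
        filter_upwards [hae] with x hx
        have h2 : ‖z - x‖ ^ 2 = ‖z‖ ^ 2 - 2 * inner ℝ z x + ‖x‖ ^ 2 := norm_sub_sq_real z x
        have h3 : inner ℝ z x ≤ ‖z‖ * ‖x‖ := real_inner_le_norm z x
        have h4 : ‖z‖ * ‖x‖ ≤ ‖z‖ * D := by gcongr
        gcongr
        nlinarith [sq_nonneg ‖x‖])
    simpa using h1
  refine ⟨hD, fun z => lt_of_lt_of_le (by positivity) (hlow z), hlow, hup, ?_⟩
  intro z
  have hxint : Integrable (fun x => (c * Real.exp (-‖z - x‖ ^ 2 / (2 * σ ^ 2))) • x) μ := by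
    refine Integrable.of_bound ((hcont z).smul continuous_id).aestronglyMeasurable (c * D) ?_
    filter_upwards [hae] with x hx
    rw [norm_smul, Real.norm_of_nonneg (by positivity)]
    exact mul_le_mul (hle z x) hx (norm_nonneg _) hc.le
  refine ⟨∫ x, (c * Real.exp (-‖z - x‖ ^ 2 / (2 * σ ^ 2))) • x ∂μ, ?_, ?_⟩
  · have h1 : Integrable (fun x => D * (c * Real.exp (-‖z - x‖ ^ 2 / (2 * σ ^ 2)))) μ :=
      (hint z).const_mul D
    refine (norm_integral_le_of_norm_le h1 ?_).trans ?_
    · filter_upwards [hae] with x hx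
      rw [norm_smul, Real.norm_of_nonneg (by positivity), mul_comm]
      gcongr
    · rw [integral_const_mul, hf]
  · have key := hasFDerivAt_integral_of_dominated_of_fderiv_le (𝕜 := ℝ) (μ := μ)
      (F := fun (z x : EuclideanSpace ℝ (Fin d)) => c * Real.exp (-‖z - x‖ ^ 2 / (2 * σ ^ 2)))
      (F' := fun (z x : EuclideanSpace ℝ (Fin d)) =>
        (c * Real.exp (-‖z - x‖ ^ 2 / (2 * σ ^ 2)) * (σ ^ 2)⁻¹) • innerSL ℝ (x - z))
      (x₀ := z) (s := Metric.ball z 1) (bound := fun _ => c * (σ ^ 2)⁻¹ * (D + (‖z‖ + 1)))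
      (Metric.ball_mem_nhds z one_pos)
      (Filter.Eventually.of_forall fun y => (hcont y).aestronglyMeasurable)
      (hint z)
      (by
        apply Continuous.aestronglyMeasurable
        fun_prop)
      (by
        filter_upwards [hae] with x hx
        intro y hy
        have hy' : ‖y‖ ≤ ‖z‖ + 1 := by
          have : ‖y - z‖ < 1 := by simpa [dist_eq_norm] using hy
          have := norm_sub_norm_le y z
          linarith
        rw [norm_smul, innerSL_apply_norm, Real.norm_of_nonneg (by positivity)]
        have h2 : ‖x - y‖ ≤ D + (‖z‖ + 1) := (norm_sub_le x y).trans (by linarith)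
        have := hle y x
        gcongr)
      (integrable_const _)
      (by
        refine Filter.Eventually.of_forall fun x y _ => ?_
        have h1 : HasFDerivAt (fun y : EuclideanSpace ℝ (Fin d) => y - x)
          (ContinuousLinearMap.id ℝ _) y := (hasFDerivAt_id y).sub_const x
        have h2 := ((h1.norm_sq.neg.mul_const ((2 * σ ^ 2)⁻¹)).exp).const_mul c
        simp only [← div_eq_mul_inv] at h2
        refine h2.congr_fderiv ?_
        ext v
        simp [inner_sub_left]
        field_simp
        ring)
    have hfe : f = fun z => ∫ x, c * Real.exp (-‖z - x‖ ^ 2 / (2 * σ ^ 2)) ∂μ := funext hf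
    rw [hasGradientAt_iff_hasFDerivAt]
    rw [← hfe] at key
    refine key.congr_fderiv ?_
    have e1 : ∀ x : EuclideanSpace ℝ (Fin d),
        (c * Real.exp (-‖z - x‖ ^ 2 / (2 * σ ^ 2)) * (σ ^ 2)⁻¹) • innerSL ℝ (x - z)
        = InnerProductSpace.toDual ℝ (EuclideanSpace ℝ (Fin d)) ((σ ^ 2)⁻¹ •
          ((c * Real.exp (-‖z - x‖ ^ 2 / (2 * σ ^ 2))) • x
            - (c * Real.exp (-‖z - x‖ ^ 2 / (2 * σ ^ 2))) • z)) := by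
      intro x
      ext v
      simp [inner_sub_left, inner_smul_left]
      ring
    have hzint := (hint z).smul_const z
    simp_rw [e1]
    have e2 := ((InnerProductSpace.toDual ℝ (EuclideanSpace ℝ (Fin d))).toContinuousLinearEquiv.toContinuousLinearMap :
      EuclideanSpace ℝ (Fin d) →L[ℝ] _).integral_comp_comm ((hxint.sub hzint).smul ((σ ^ 2)⁻¹))
    refine Eq.trans e2 ?_
    have e3 : ∫ x, ((σ ^ 2)⁻¹ • ((fun x => (c * Real.exp (-‖z - x‖ ^ 2 / (2 * σ ^ 2))) • x)
            - fun x => (c * Real.exp (-‖z - x‖ ^ 2 / (2 * σ ^ 2))) • z)) x ∂μ =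
        (σ ^ 2)⁻¹ • ((∫ x, (c * Real.exp (-‖z - x‖ ^ 2 / (2 * σ ^ 2))) • x ∂μ) - f z • z) := by
      simp only [Pi.smul_apply, Pi.sub_apply]
      rw [integral_smul, integral_sub hxint hzint, integral_smul_const, hf]
    rw [e3]
    rfl

lemma aux_meas_gradient {d : ℕ} (f : EuclideanSpace ℝ (Fin d) → ℝ) :
    Measurable (fun z => gradient f z) := by
  unfold gradient
  exact (InnerProductSpace.toDual ℝ (EuclideanSpace ℝ (Fin d))).symm.continuous.measurable.comp
    (measurable_fderiv ℝ f)

lemma aux_int {d : ℕ} (b : ℝ) (hb : 0 < b) :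
    Integrable (fun z : EuclideanSpace ℝ (Fin d) => Real.exp (-b * ‖z‖ ^ 2)) := by
  have h := GaussianFourier.integrable_cexp_neg_mul_sq_norm_add
    (V := EuclideanSpace ℝ (Fin d)) (b := (b : ℂ)) (by simpa using hb) 0 0
  refine h.re.congr (Filter.Eventually.of_forall fun z => ?_)
  have : (-(b : ℂ) * (‖z‖ : ℂ) ^ 2 + 0 * ((inner ℝ (0 : EuclideanSpace ℝ (Fin d)) z : ℝ) : ℂ))
      = ((-b * ‖z‖ ^ 2 : ℝ) : ℂ) := by push_cast; ring
  simp only [this, ← Complex.ofReal_exp]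
  exact Complex.ofReal_re _

theorem score_difference_quotients_converge_in_L2
    (d : ℕ) (ρ ν : Measure (EuclideanSpace ℝ (Fin d)))
    [IsProbabilityMeasure ρ] [IsProbabilityMeasure ν]
    (Dρ Dν : ℝ)
    (hρsupp : ρ (Metric.closedBall 0 Dρ)ᶜ = 0)
    (hνsupp : ν (Metric.closedBall 0 Dν)ᶜ = 0)
    (σ : ℝ) (hσ : 0 < σ)
    (ρσ νσ : EuclideanSpace ℝ (Fin d) → ℝ)
    (hρσ : ∀ z, ρσ z =
      ∫ x, (2 * π * σ ^ 2) ^ (-(d : ℝ) / 2) * Real.exp (-‖z - x‖ ^ 2 / (2 * σ ^ 2)) ∂ρ)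
    (hνσ : ∀ z, νσ z =
      ∫ x, (2 * π * σ ^ 2) ^ (-(d : ℝ) / 2) * Real.exp (-‖z - x‖ ^ 2 / (2 * σ ^ 2)) ∂ν)
    (s : ℝ → EuclideanSpace ℝ (Fin d) → EuclideanSpace ℝ (Fin d))
    (hs : ∀ η z, s η z = gradient (fun y => Real.log ((1 - η) * ρσ y + η * νσ y)) z)
    (sν : EuclideanSpace ℝ (Fin d) → EuclideanSpace ℝ (Fin d))
    (hsν : ∀ z, sν z = gradient (fun y => Real.log (νσ y)) z)
    (g : EuclideanSpace ℝ (Fin d) → EuclideanSpace ℝ (Fin d))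
    (hg : ∀ z, g z = (νσ z / ρσ z) • (sν z - s 0 z))
    (F : ℝ → EuclideanSpace ℝ (Fin d) → EuclideanSpace ℝ (Fin d))
    (hF : ∀ h z, F h z = h⁻¹ • (s h z - s 0 z))
    (G : EuclideanSpace ℝ (Fin d) → ℝ)
    (hG : ∀ z, G z = (2 / ρσ z) *
      ((ρσ z / σ ^ 2) * (2 * Dρ + Dν) + (νσ z / σ ^ 2) * (2 * Dν + Dρ))) :
    (∀ z, Filter.Tendsto (fun h => F h z) (nhdsWithin 0 (Set.Ioi 0)) (nhds (g z))) ∧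
    (∃ h₀ > (0 : ℝ), ∀ z, ∀ h : ℝ, 0 < h → h < h₀ → ‖F h z‖ ≤ G z) ∧
    Filter.Tendsto (fun h => ∫ z, ‖F h z - g z‖ ^ 2 * ρσ z)
      (nhdsWithin 0 (Set.Ioi 0)) (nhds 0) := by
  have hc : 0 < (2 * π * σ ^ 2) ^ (-(d : ℝ) / 2) := by positivity
  generalize (2 * π * σ ^ 2) ^ (-(d : ℝ) / 2) = c at hc hρσ hνσ
  obtain ⟨hDρ, ha, halow, -, hgrada⟩ := aux_noised ρ Dρ hρsupp σ c hσ hc ρσ hρσ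
  obtain ⟨hDν, hb, -, hbup, hgradb⟩ := aux_noised ν Dν hνsupp σ c hσ hc νσ hνσ
  choose ma hma hA using hgrada
  choose mb hmb hB using hgradb
  have hσ2 : 0 < σ ^ 2 := by positivity
  have hlog : ∀ (p : EuclideanSpace ℝ (Fin d) → ℝ) (v z : EuclideanSpace ℝ (Fin d)),
      0 < p z → HasGradientAt p v z → gradient (fun y => Real.log (p y)) z = (p z)⁻¹ • v := by
    intro p v z hp h
    apply HasGradientAt.gradient
    rw [hasGradientAt_iff_hasFDerivAt] at h ⊢
    refine (h.log hp.ne').congr_fderiv ?_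
    simp
  have hcomb : ∀ (η : ℝ) (z : EuclideanSpace ℝ (Fin d)),
      HasGradientAt (fun y => (1 - η) * ρσ y + η * νσ y)
        ((1 - η) • ((σ ^ 2)⁻¹ • (ma z - ρσ z • z)) + η • ((σ ^ 2)⁻¹ • (mb z - νσ z • z))) z := by
    intro η z
    have h1 := hA z
    have h2 := hB z
    rw [hasGradientAt_iff_hasFDerivAt] at h1 h2 ⊢
    refine ((h1.const_mul (1 - η)).add (h2.const_mul η)).congr_fderiv ?_
    simp only [map_add, map_smul]
  have hsval : ∀ (η : ℝ) (z : EuclideanSpace ℝ (Fin d)), 0 ≤ η → η < 1 →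
      0 < (1 - η) * ρσ z + η * νσ z ∧
      s η z = ((1 - η) * ρσ z + η * νσ z)⁻¹ •
        ((1 - η) • ((σ ^ 2)⁻¹ • (ma z - ρσ z • z)) + η • ((σ ^ 2)⁻¹ • (mb z - νσ z • z))) := by
    intro η z h0 h1
    have hp : 0 < (1 - η) * ρσ z + η * νσ z := by
      have := mul_pos (sub_pos.2 h1) (ha z)
      have := mul_nonneg h0 (hb z).le
      linarith
    refine ⟨hp, ?_⟩
    rw [hs]
    exact hlog (fun y => (1 - η) * ρσ y + η * νσ y) _ z hp (hcomb η z)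
  have hs0 : ∀ z, s 0 z = (ρσ z)⁻¹ • ((σ ^ 2)⁻¹ • (ma z - ρσ z • z)) := by
    intro z
    rw [(hsval 0 z le_rfl one_pos).2]
    simp
  have hsν' : ∀ z, sν z = (νσ z)⁻¹ • ((σ ^ 2)⁻¹ • (mb z - νσ z • z)) := by
    intro z
    rw [hsν, hlog νσ _ z (hb z) (hB z)]
  set W : EuclideanSpace ℝ (Fin d) → EuclideanSpace ℝ (Fin d) :=
    fun z => (σ ^ 2)⁻¹ • (ρσ z • mb z - νσ z • ma z) with hW
  have hWn : ∀ z, ‖W z‖ ≤ (σ ^ 2)⁻¹ * (ρσ z * νσ z * (Dρ + Dν)) := by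
    intro z
    rw [hW]
    simp only
    rw [norm_smul, Real.norm_of_nonneg (by positivity)]
    gcongr
    refine (norm_sub_le _ _).trans ?_
    rw [norm_smul, norm_smul, Real.norm_of_nonneg (ha z).le, Real.norm_of_nonneg (hb z).le]
    have h1 := mul_le_mul_of_nonneg_left (hma z) (hb z).le
    have h2 := mul_le_mul_of_nonneg_left (hmb z) (ha z).le
    linarith
  have hFval : ∀ (h : ℝ) (z : EuclideanSpace ℝ (Fin d)), 0 < h → h < 1 →
      F h z = (ρσ z * ((1 - h) * ρσ z + h * νσ z))⁻¹ • W z := by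
    intro h z h0 h1
    obtain ⟨hp, he⟩ := hsval h z h0.le h1
    rw [hF, he, hs0, hW]
    have haz := (ha z).ne'
    have hpz := hp.ne'
    have hh := h0.ne'
    have hs2 := hσ2.ne'
    ext i
    simp only [PiLp.smul_apply, PiLp.sub_apply, PiLp.add_apply, smul_eq_mul]
    field_simp
    ring
  have hgval : ∀ z, g z = (ρσ z * ρσ z)⁻¹ • W z := by
    intro z
    rw [hg, hsν', hs0, hW]
    have haz := (ha z).ne'
    have hbz := (hb z).ne'
    ext i
    simp only [PiLp.smul_apply, PiLp.sub_apply, smul_eq_mul]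
    field_simp
    ring
  have hFb : ∀ (h : ℝ) (z : EuclideanSpace ℝ (Fin d)), 0 < h → h < 1 / 2 →
      ‖F h z‖ ≤ 2 * (Dρ + Dν) * (σ ^ 2)⁻¹ * (νσ z / ρσ z) := by
    intro h z h0 h1
    have haz := ha z
    have hbz := hb z
    rw [hFval h z h0 (by linarith), norm_smul, norm_inv]
    have hp : ρσ z / 2 ≤ (1 - h) * ρσ z + h * νσ z := by nlinarith [mul_pos h0 hbz]
    have hp' : 0 < (1 - h) * ρσ z + h * νσ z := by linarith
    rw [Real.norm_of_nonneg (by positivity)]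
    calc (ρσ z * ((1 - h) * ρσ z + h * νσ z))⁻¹ * ‖W z‖
        ≤ (ρσ z * (ρσ z / 2))⁻¹ * ((σ ^ 2)⁻¹ * (ρσ z * νσ z * (Dρ + Dν))) := by
          gcongr
          exact hWn z
      _ = _ := by field_simp
  have hgb : ∀ z, ‖g z‖ ≤ 2 * (Dρ + Dν) * (σ ^ 2)⁻¹ * (νσ z / ρσ z) := by
    intro z
    have haz := ha z
    have hbz := hb z
    rw [hgval z, norm_smul, norm_inv, Real.norm_of_nonneg (by positivity)]
    calc (ρσ z * ρσ z)⁻¹ * ‖W z‖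
        ≤ (ρσ z * (ρσ z / 2))⁻¹ * ((σ ^ 2)⁻¹ * (ρσ z * νσ z * (Dρ + Dν))) := by
          gcongr
          · linarith
          · exact hWn z
      _ = _ := by field_simp
  have hsmall : ∀ᶠ h : ℝ in nhdsWithin 0 (Set.Ioi 0), 0 < h ∧ h < 1 / 2 := by
    filter_upwards [Ioo_mem_nhdsGT (show (0 : ℝ) < 1 / 2 by norm_num)] with h hh
    exact hh
  have hpt : ∀ z, Filter.Tendsto (fun h => F h z) (nhdsWithin 0 (Set.Ioi 0)) (nhds (g z)) := by
    intro z
    have haz := (ha z).ne'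
    have hca : ContinuousAt
        (fun h : ℝ => (ρσ z * ((1 - h) * ρσ z + h * νσ z))⁻¹ • W z) 0 := by
      refine ContinuousAt.fun_smul ?_ continuousAt_const
      apply ContinuousAt.inv₀
      · fun_prop
      · simpa using haz
    have ht := hca.tendsto.mono_left (nhdsWithin_le_nhds (s := Set.Ioi (0 : ℝ)))
    have e : (ρσ z * ((1 - 0) * ρσ z + 0 * νσ z))⁻¹ • W z = g z := by
      rw [hgval]; simp
    rw [e] at ht
    refine ht.congr' ?_
    filter_upwards [hsmall] with h hh
    rw [hFval h z hh.1 (by linarith [hh.2])]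
  refine ⟨hpt, ⟨1 / 2, by norm_num, ?_⟩, ?_⟩
  · intro z h h0 h1
    refine (hFb h z h0 h1).trans ?_
    have haz := ha z
    have hbz := hb z
    rw [hG]
    have e : 2 / ρσ z * (ρσ z / σ ^ 2 * (2 * Dρ + Dν) + νσ z / σ ^ 2 * (2 * Dν + Dρ))
        = 2 * (Dρ + Dν) * (σ ^ 2)⁻¹ * (νσ z / ρσ z)
          + (2 / σ ^ 2 * (2 * Dρ + Dν) + 2 * Dν * (σ ^ 2)⁻¹ * (νσ z / ρσ z)) := by
      field_simp
      ring
    rw [e]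
    have : 0 ≤ 2 / σ ^ 2 * (2 * Dρ + Dν) + 2 * Dν * (σ ^ 2)⁻¹ * (νσ z / ρσ z) := by positivity
    linarith
  · have hma' : Measurable ρσ := by
      have : Differentiable ℝ ρσ := fun z => (hA z).differentiableAt
      exact this.continuous.measurable
    have hmb' : Measurable νσ := by
      have : Differentiable ℝ νσ := fun z => (hB z).differentiableAt
      exact this.continuous.measurable
    have hms : ∀ η, Measurable (s η) := by
      intro η
      have : s η = fun z => gradient (fun y => Real.log ((1 - η) * ρσ y + η * νσ y)) z :=
        funext (hs η)
      rw [this]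
      exact aux_meas_gradient _
    have hmsν : Measurable sν := by
      have : sν = fun z => gradient (fun y => Real.log (νσ y)) z := funext hsν
      rw [this]
      exact aux_meas_gradient _
    have hmg : Measurable g := by
      rw [show g = fun z => (νσ z / ρσ z) • (sν z - s 0 z) from funext hg]
      exact (hmb'.div hma').smul (hmsν.sub (hms 0))
    have hmF : ∀ h, Measurable (F h) := by
      intro h
      rw [show F h = fun z => h⁻¹ • (s h z - s 0 z) from funext (hF h)]
      exact ((hms h).sub (hms 0)).const_smul (h⁻¹)
    have hz : (0 : ℝ) = ∫ _ : EuclideanSpace ℝ (Fin d), (0 : ℝ) := by simp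
    suffices hgoal : Filter.Tendsto (fun h => ∫ z, ‖F h z - g z‖ ^ 2 * ρσ z)
        (nhdsWithin 0 (Set.Ioi 0)) (nhds (∫ _ : EuclideanSpace ℝ (Fin d), (0 : ℝ))) by
      rwa [← hz] at hgoal
    set K : ℝ := 4 * (Dρ + Dν) * (σ ^ 2)⁻¹ with hK
    have hK0 : 0 ≤ K := by positivity
    set M : ℝ := K ^ 2 * (c * Real.exp ((Dρ ^ 2 + (4 * Dν + 2 * Dρ) ^ 2 / 2) / (2 * σ ^ 2))) with hM
    refine tendsto_integral_filter_of_dominated_convergence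
      (fun z => M * Real.exp (-(4 * σ ^ 2)⁻¹ * ‖z‖ ^ 2)) ?_ ?_
      ((aux_int _ (by positivity)).const_mul _) ?_
    · refine Filter.Eventually.of_forall fun h => Measurable.aestronglyMeasurable ?_
      exact (((hmF h).sub hmg).norm.pow_const 2).mul hma'
    · filter_upwards [hsmall] with h hh
      refine Filter.Eventually.of_forall fun z => ?_
      have haz := ha z
      have hbz := hb z
      rw [Real.norm_of_nonneg (by positivity)]
      have h1 : ‖F h z - g z‖ ≤ K * (νσ z / ρσ z) := by
        refine (norm_sub_le _ _).trans ?_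
        have := hFb h z hh.1 hh.2
        have := hgb z
        rw [hK]
        linarith
      have h2 : νσ z ^ 2 / ρσ z ≤
          (c * Real.exp (-(‖z‖ ^ 2 - 2 * Dν * ‖z‖) / (2 * σ ^ 2))) ^ 2 /
          (c * Real.exp (-(‖z‖ ^ 2 + 2 * Dρ * ‖z‖ + Dρ ^ 2) / (2 * σ ^ 2))) := by
        have := halow z
        have := hbup z
        gcongr
      have h3 : (c * Real.exp (-(‖z‖ ^ 2 - 2 * Dν * ‖z‖) / (2 * σ ^ 2))) ^ 2 /
          (c * Real.exp (-(‖z‖ ^ 2 + 2 * Dρ * ‖z‖ + Dρ ^ 2) / (2 * σ ^ 2)))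
          = c * Real.exp ((-2 * (‖z‖ ^ 2 - 2 * Dν * ‖z‖) + (‖z‖ ^ 2 + 2 * Dρ * ‖z‖ + Dρ ^ 2))
            / (2 * σ ^ 2)) := by
        rw [div_eq_iff (by positivity), mul_pow, ← Real.exp_nat_mul,
          mul_mul_mul_comm, ← Real.exp_add, sq]
        congr 2
        push_cast
        ring
      have h4 : c * Real.exp ((-2 * (‖z‖ ^ 2 - 2 * Dν * ‖z‖) + (‖z‖ ^ 2 + 2 * Dρ * ‖z‖ + Dρ ^ 2))
            / (2 * σ ^ 2)) ≤ c * Real.exp ((Dρ ^ 2 + (4 * Dν + 2 * Dρ) ^ 2 / 2) / (2 * σ ^ 2)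
              + -(4 * σ ^ 2)⁻¹ * ‖z‖ ^ 2) := by
        have e : (Dρ ^ 2 + (4 * Dν + 2 * Dρ) ^ 2 / 2) / (2 * σ ^ 2) + -(4 * σ ^ 2)⁻¹ * ‖z‖ ^ 2
          = (Dρ ^ 2 + (4 * Dν + 2 * Dρ) ^ 2 / 2 - ‖z‖ ^ 2 / 2) / (2 * σ ^ 2) := by
          field_simp
          ring
        rw [e]
        gcongr
        nlinarith [sq_nonneg (4 * Dν + 2 * Dρ - ‖z‖)]
      calc ‖F h z - g z‖ ^ 2 * ρσ z ≤ (K * (νσ z / ρσ z)) ^ 2 * ρσ z := by gcongr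
        _ = K ^ 2 * (νσ z ^ 2 / ρσ z) := by field_simp
        _ ≤ K ^ 2 * (c * Real.exp ((Dρ ^ 2 + (4 * Dν + 2 * Dρ) ^ 2 / 2) / (2 * σ ^ 2)
              + -(4 * σ ^ 2)⁻¹ * ‖z‖ ^ 2)) := by
            gcongr
            exact h2.trans (h3.le.trans h4)
        _ = _ := by rw [Real.exp_add, hM]; ring
    · refine Filter.Eventually.of_forall fun z => ?_
      have h1 : Filter.Tendsto (fun h => ‖F h z - g z‖ ^ 2 * ρσ z) (nhdsWithin 0 (Set.Ioi 0))
          (nhds (‖g z - g z‖ ^ 2 * ρσ z)) :=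
        ((((hpt z).sub_const (g z)).norm).pow 2).mul_const _
      simpa using h1
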